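/- Braid relations for co-Pitman transforms: let V be a finite-dimensional real vector space with dual V∨, T > 0, and let α, β ∈ V and α∨, β∨ ∈ V∨ satisfy α∨(α) = β∨(β) = 2, α∨(β) < 0, β∨(α) < 0, and α∨(β)·β∨(α) = 4 cos²(π/n) for some integer n ≥ 2. Then E_α E_β E_α ⋯ = E_β E_α E_β ⋯, where each side is the composition of n alternating factors, as transformations of the set of continuous paths π : [0,T] → V with π(0) = 0. -/

import Mathlib

/-- The Pitman transform associated with a pair `(α, α∨)`:
`P_α π (t) = π t − (inf_{0 ≤ s ≤ t} α∨(π s)) • α`. -/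
noncomputable def pitman {V : Type*} [AddCommGroup V] [Module ℝ V]
    (α : V) (αv : Module.Dual ℝ V) (π : ℝ → V) : ℝ → V :=
  fun t => π t - sInf ((fun s => αv (π s)) '' Set.Icc 0 t) • α

/-- The co-Pitman transform `E_α = κ ∘ P_α ∘ κ` on paths on `[0,T]`:
`E_α π (t) = π t − (inf_{t ≤ s ≤ T} α∨(π s)) • α + (inf_{0 ≤ s ≤ T} α∨(π s)) • α`. -/
noncomputable def copitman {V : Type*} [AddCommGroup V] [Module ℝ V]
    (T : ℝ) (α : V) (αv : Module.Dual ℝ V) (π : ℝ → V) : ℝ → V :=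
  fun t => π t - sInf ((fun s => αv (π s)) '' Set.Icc t T) • α
            + sInf ((fun s => αv (π s)) '' Set.Icc 0 T) • α

/-- `altComp P Q n` is the alternating composition `P ∘ Q ∘ P ∘ ⋯` with `n` factors. -/
def altComp {X : Type*} (P Q : X → X) : ℕ → (X → X)
  | 0 => id
  | n + 1 => P ∘ altComp Q P n

/-!
Replacing `(α, α∨)` by `(r α, r⁻¹ α∨)`, `r > 0`, does not change `P_α`, so both pairings may be
taken equal to `-c`, where `c = 2 cos (π / n)`. An alternating word `P_α P_β ⋯` of length `m + 1`
then maps `σ` to `σ - Φ_{m+1} α - Ψ_m β`, where `Φ` and `Ψ` are infima of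
`p₀ f(s₁) + p₁ g(s₂) + p₂ f(s₃) + ⋯` over decreasing chains of times, `f` and `g` being the two
coordinates of `σ` under `α∨` and `β∨` (in one order for `Φ`, in the other for `Ψ`), and
`p_i = sin ((i + 1) π / n) / sin (π / n)`, which is nonnegative for `i < n`. The induction on `m`
rests on an identity for the running infimum `J`: the path `f - 2 J f` can be traded for `f` in
two-step chain infima, at the cost of multiples of `J f`. Since `p_{n-1} = 0`, at length `n` the
chains of lengths `n` and `n - 1` have the same infimum, and the formula becomes symmetric in `α`
and `β`. Conjugation by path reversal carries the relation over to the co-Pitman transforms.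
-/

open Set Polynomial

section RunningInfimum

/-- The running infimum `t ↦ inf_{0 ≤ s ≤ t} f s` of `f`. -/
noncomputable def runInf (f : ℝ → ℝ) (t : ℝ) : ℝ := sInf (f '' Icc 0 t)

variable {f g : ℝ → ℝ} {s t v T : ℝ}

lemma runInf_le (hf : ContinuousOn f (Icc 0 t)) (hs : s ∈ Icc 0 t) : runInf f t ≤ f s :=
  csInf_le (isCompact_Icc.image_of_continuousOn hf).bddBelow (mem_image_of_mem f hs)

lemma exists_runInf_eq (hf : ContinuousOn f (Icc 0 t)) (ht : 0 ≤ t) :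
    ∃ s ∈ Icc 0 t, runInf f t = f s :=
  isCompact_Icc.exists_sInf_image_eq (nonempty_Icc.2 ht) hf

lemma runInf_anti (hf : ContinuousOn f (Icc 0 t)) (hs : 0 ≤ s) (hst : s ≤ t) :
    runInf f t ≤ runInf f s :=
  csInf_le_csInf (isCompact_Icc.image_of_continuousOn hf).bddBelow
    ((nonempty_Icc.2 hs).image f) (image_mono (Icc_subset_Icc_right hst))

lemma runInf_congr (h : EqOn f g (Icc 0 T)) : EqOn (runInf f) (runInf g) (Icc 0 T) := by
  intro t ht
  rw [runInf, runInf, image_congr (h.mono (Icc_subset_Icc_right ht.2))]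

lemma runInf_smul {a : ℝ} (ha : 0 ≤ a) (f : ℝ → ℝ) : runInf (a • f) = a • runInf f := by
  funext t
  rw [Pi.smul_apply, runInf, runInf, ← Real.sInf_smul_of_nonneg ha, ← image_smul, image_image]
  rfl

lemma runInf_eq_sInf_image_Icc_zero_one (f : ℝ → ℝ) (ht : 0 ≤ t) :
    runInf f t = sInf ((fun u ↦ f (u * t)) '' Icc 0 1) := by
  rw [← image_image f (· * t), image_mul_right_Icc zero_le_one ht, zero_mul, one_mul, runInf]

lemma continuousOn_runInf (hf : ContinuousOn f (Icc 0 T)) :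
    ContinuousOn (runInf f) (Icc 0 T) := by
  rcases lt_or_ge T 0 with hT | hT
  · simp [Icc_eq_empty_of_lt hT]
  let g := IccExtend hT ((Icc 0 T).domRestrict f)
  have hg : Continuous g := hf.domRestrict.Icc_extend'
  have hfg : EqOn f g (Icc 0 T) := fun s hs ↦
    (IccExtend_of_mem hT ((Icc 0 T).domRestrict f) hs).symm
  have hcont : Continuous fun t ↦ sInf ((fun u ↦ g (u * t)) '' Icc 0 1) :=
    isCompact_Icc.continuous_sInf (f := fun t u ↦ g (u * t)) (by fun_prop)
  refine hcont.continuousOn.congr fun t ht ↦ ?_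
  rw [runInf_congr hfg ht, runInf_eq_sInf_image_Icc_zero_one g ht.1]

lemma exists_runInf_eq_of_lt (hf : ContinuousOn f (Icc 0 t)) (hv : 0 ≤ v) (hvt : v ≤ t)
    (hlt : runInf f t < runInf f v) : ∃ r ∈ Icc v t, f r = runInf f t := by
  obtain ⟨r, hr, hfr⟩ := exists_runInf_eq hf (hv.trans hvt)
  refine ⟨r, ⟨?_, hr.2⟩, hfr.symm⟩
  by_contra! hrv
  have := runInf_le (hf.mono (Icc_subset_Icc_right hvt)) ⟨hr.1, hrv.le⟩
  linarith

lemma exists_eq_runInf_and_runInf_eq (hf : ContinuousOn f (Icc 0 t)) (hv : 0 ≤ v) (hvt : v ≤ t)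
    (hlt : runInf f t < runInf f v) :
    ∃ s ∈ Icc v t, f s = runInf f v ∧ runInf f s = runInf f v := by
  have hit : ∀ r ∈ Icc v t, f r < runInf f v → ∃ s ∈ Icc v r, f s = runInf f v := by
    intro r hr hfr
    have hfv : runInf f v ≤ f v :=
      runInf_le (hf.mono (Icc_subset_Icc_right hvt)) (right_mem_Icc.2 hv)
    exact intermediate_value_Icc' hr.1 (hf.mono (Icc_subset_Icc hv hr.2)) ⟨hfr.le, hfv⟩
  have hcompact : IsCompact (Icc v t ∩ f ⁻¹' {runInf f v}) :=
    isCompact_Icc.of_isClosed_subset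
      ((hf.mono (Icc_subset_Icc_left hv)).preimage_isClosed_of_isClosed isClosed_Icc
        isClosed_singleton) inter_subset_left
  obtain ⟨r, hr, hfr⟩ := exists_runInf_eq_of_lt hf hv hvt hlt
  obtain ⟨u, hu, hfu⟩ := hit r hr (hfr ▸ hlt)
  -- The first time after `v` at which `f` takes the value `runInf f v` has both properties.
  obtain ⟨s, ⟨hs, hfs⟩, hfirst⟩ :=
    hcompact.exists_isLeast ⟨u, Icc_subset_Icc_right hr.2 hu, hfu⟩
  have hfs' := hf.mono (Icc_subset_Icc_right hs.2)
  refine ⟨s, hs, hfs, (runInf_anti hfs' hv hs.1).eq_of_not_lt fun hslt ↦ ?_⟩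
  obtain ⟨w, hw, hfw⟩ := exists_runInf_eq_of_lt hfs' hv hs.1 hslt
  obtain ⟨s', hs', hfs'⟩ := hit w (Icc_subset_Icc_right hs.2 hw) (hfw ▸ hslt)
  have hsw : s = w :=
    (hfirst ⟨Icc_subset_Icc_right (hw.2.trans hs.2) hs', hfs'⟩).trans hs'.2 |>.antisymm hw.2
  rw [← hsw, hfs] at hfw
  exact hslt.ne' hfw

lemma exists_sub_two_mul_runInf_le (hf : ContinuousOn f (Icc 0 t)) (hv : 0 ≤ v)
    {r : ℝ} (hr : r ∈ Icc v t) :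
    ∃ s ∈ Icc v t, f s - 2 * runInf f s + runInf f t + runInf f v ≤ f r := by
  have hfr := hf.mono (Icc_subset_Icc_right hr.2)
  have hrv := runInf_anti hfr hv hr.1
  have htr := runInf_anti hf (hv.trans hr.1) hr.2
  rcases (htr.trans hrv).eq_or_lt with htv | htv
  · exact ⟨r, hr, by linarith⟩
  · obtain ⟨s, hs, hfs, hJs⟩ := exists_eq_runInf_and_runInf_eq hf hv (hr.1.trans hr.2) htv
    have := runInf_le hf ⟨hv.trans hr.1, hr.2⟩
    exact ⟨s, hs, by linarith⟩

lemma exists_le_sub_two_mul_runInf (hf : ContinuousOn f (Icc 0 t)) (hv : 0 ≤ v)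
    {r : ℝ} (hr : r ∈ Icc v t) :
    ∃ s ∈ Icc v t, f s ≤ f r - 2 * runInf f r + runInf f t + runInf f v := by
  have hfr := hf.mono (Icc_subset_Icc_right hr.2)
  have hrv := runInf_anti hfr hv hr.1
  have htr := runInf_anti hf (hv.trans hr.1) hr.2
  rcases (htr.trans hrv).eq_or_lt with htv | htv
  · exact ⟨r, hr, by linarith⟩
  · obtain ⟨s, hs, hfs⟩ := exists_runInf_eq_of_lt hf hv (hr.1.trans hr.2) htv
    have := runInf_le hfr ⟨hv.trans hr.1, le_rfl⟩
    exact ⟨s, hs, by linarith⟩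

lemma le_runInf_add_runInf (ht : 0 ≤ t) {m : ℝ} (hf : ContinuousOn f (Icc 0 t))
    (hg : ContinuousOn g (Icc 0 t))
    (h : ∀ v s, 0 ≤ v → v ≤ s → s ≤ t → m ≤ f s + g v) : m ≤ runInf (f + runInf g) t := by
  obtain ⟨s, hs, hs_eq⟩ := exists_runInf_eq (hf.add (continuousOn_runInf hg)) ht
  obtain ⟨v, hv, hv_eq⟩ := exists_runInf_eq (hg.mono (Icc_subset_Icc_right hs.2)) hs.1
  rw [hs_eq, Pi.add_apply, hv_eq]
  exact h v s hv.1 hv.2 hs.2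

lemma runInf_add_runInf_le (hf : ContinuousOn f (Icc 0 t)) (hg : ContinuousOn g (Icc 0 t))
    (hv : 0 ≤ v) (hvs : v ≤ s) (hst : s ≤ t) : runInf (f + runInf g) t ≤ f s + g v :=
  (runInf_le (hf.add (continuousOn_runInf hg)) ⟨hv.trans hvs, hst⟩).trans <|
    add_le_add_right (runInf_le (hg.mono (Icc_subset_Icc_right hst)) ⟨hv, hvs⟩) _

theorem runInf_reflect {a : ℝ} (ha : 0 ≤ a) (hf : ContinuousOn f (Icc 0 T))
    (hg : ContinuousOn g (Icc 0 T)) :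
    EqOn (runInf (a • (f - (2 : ℝ) • runInf f) + runInf (g + a • runInf f)) + a • runInf f)
      (runInf (a • f + runInf g)) (Icc 0 T) := by
  intro t ht
  replace hf := hf.mono (Icc_subset_Icc_right ht.2)
  replace hg := hg.mono (Icc_subset_Icc_right ht.2)
  have hJ := continuousOn_runInf hf
  have hf' : ContinuousOn (a • (f - (2 : ℝ) • runInf f)) (Icc 0 t) := by fun_prop
  have hg' : ContinuousOn (g + a • runInf f) (Icc 0 t) := by fun_prop
  rw [Pi.add_apply, Pi.smul_apply, smul_eq_mul]
  apply le_antisymm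
  · refine le_runInf_add_runInf ht.1 (hf.const_smul a) hg fun v r hv hvr hrt ↦ ?_
    obtain ⟨s, hs, hle⟩ := exists_sub_two_mul_runInf_le hf hv ⟨hvr, hrt⟩
    have := runInf_add_runInf_le hf' hg' hv hs.1 hs.2
    simp only [Pi.add_apply, Pi.sub_apply, Pi.smul_apply, smul_eq_mul] at this ⊢
    linarith [mul_le_mul_of_nonneg_left hle ha]
  · rw [← sub_le_iff_le_add]
    refine le_runInf_add_runInf ht.1 hf' hg' fun v r hv hvr hrt ↦ ?_
    obtain ⟨s, hs, hle⟩ := exists_le_sub_two_mul_runInf hf hv ⟨hvr, hrt⟩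
    have := runInf_add_runInf_le (hf.const_smul a) hg hv hs.1 hs.2
    simp only [Pi.add_apply, Pi.sub_apply, Pi.smul_apply, smul_eq_mul] at this ⊢
    linarith [mul_le_mul_of_nonneg_left hle ha]

end RunningInfimum

section ChainInfimum

/-- The infimum of `p 0 * f s₁ + p 1 * g s₂ + p 2 * f s₃ + ⋯` (`m` terms, alternating `f` and `g`)
over all chains `t ≥ s₁ ≥ s₂ ≥ ⋯ ≥ 0`. -/
noncomputable def chainInf : ℕ → (ℕ → ℝ) → (ℝ → ℝ) → (ℝ → ℝ) → (ℝ → ℝ)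
  | 0, _, _, _ => 0
  | m + 1, p, f, g => runInf (p 0 • f + chainInf m (fun i ↦ p (i + 1)) g f)

variable {f g : ℝ → ℝ} {p : ℕ → ℝ} {c T : ℝ} {m : ℕ}

lemma continuousOn_chainInf (m : ℕ) (p : ℕ → ℝ) (hf : ContinuousOn f (Icc 0 T))
    (hg : ContinuousOn g (Icc 0 T)) : ContinuousOn (chainInf m p f g) (Icc 0 T) := by
  induction m generalizing p f g with
  | zero => exact continuousOn_const
  | succ m ih => exact continuousOn_runInf ((hf.const_smul _).add (ih _ hg hf))

lemma chainInf_succ_of_eq_zero (f g : ℝ → ℝ) (hp : p m = 0) :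
    chainInf (m + 1) p f g = chainInf m p f g := by
  induction m generalizing p f g with
  | zero => simpa [chainInf, hp] using runInf_smul le_rfl 0
  | succ m ih => rw [chainInf, ih g f hp, ← chainInf]

theorem chainInf_reflect_of_even (hf : ContinuousOn f (Icc 0 T)) (hg : ContinuousOn g (Icc 0 T))
    (hrec : ∀ i, p (i + 2) = c * p (i + 1) - p i) (hm : Even m) (hp : ∀ i ≤ m, 0 ≤ p i) :
    EqOn (chainInf m p (f - (2 : ℝ) • runInf f) (g + c • runInf f) + p 0 • runInf f)
      (chainInf (m + 1) p f g) (Icc 0 T) := by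
  induction m using Nat.twoStepInduction generalizing p with
  | zero =>
    intro t _
    simp [chainInf, runInf_smul (hp 0 le_rfl)]
  | one => exact absurd hm Nat.not_even_one
  | more m ih _ =>
    set p₂ : ℕ → ℝ := fun i ↦ p (i + 1 + 1)
    have ih' := ih (p := p₂) (fun i ↦ hrec (i + 2)) (by grind) (fun i hi ↦ hp (i + 2) (by omega))
    have hinner : EqOn
        (p 1 • (g + c • runInf f) + chainInf m p₂ (f - (2 : ℝ) • runInf f) (g + c • runInf f))
        (p 1 • g + chainInf (m + 1) p₂ f g + p 0 • runInf f) (Icc 0 T) := by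
      intro s hs
      have := ih' hs
      have hrec₀ : p₂ 0 = c * p 1 - p 0 := hrec 0
      simp only [Pi.add_apply, Pi.smul_apply, smul_eq_mul] at this ⊢
      linear_combination this - hrec₀ * runInf f s
    have hcont : ContinuousOn (p 1 • g + chainInf (m + 1) p₂ f g) (Icc 0 T) :=
      (hg.const_smul _).add (continuousOn_chainInf _ _ hf hg)
    have houter : EqOn
        (chainInf (m + 2) p (f - (2 : ℝ) • runInf f) (g + c • runInf f))
        (runInf (p 0 • (f - (2 : ℝ) • runInf f) +
          runInf (p 1 • g + chainInf (m + 1) p₂ f g + p 0 • runInf f))) (Icc 0 T) :=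
      runInf_congr fun s hs ↦ congrArg ((p 0 • (f - (2 : ℝ) • runInf f)) s + ·)
        (runInf_congr hinner hs)
    intro t ht
    exact (congrArg (· + (p 0 • runInf f) t) (houter ht)).trans
      (runInf_reflect (hp 0 (by omega)) hf hcont ht)

theorem chainInf_reflect_of_odd (hf : ContinuousOn f (Icc 0 T)) (hg : ContinuousOn g (Icc 0 T))
    (h₁ : p 1 = c * p 0) (hrec : ∀ i, p (i + 2) = c * p (i + 1) - p i) (hm : Odd m)
    (hp : ∀ i ≤ m, 0 ≤ p i) :
    EqOn (chainInf m p (g + c • runInf f) (f - (2 : ℝ) • runInf f))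
      (chainInf (m + 1) p g f) (Icc 0 T) := by
  obtain ⟨k, rfl⟩ := hm
  refine runInf_congr fun s hs ↦ ?_
  have := chainInf_reflect_of_even hf hg (p := fun i ↦ p (i + 1)) (fun i ↦ hrec (i + 1))
    (even_two_mul k) (fun i hi ↦ hp (i + 1) (by omega)) hs
  simp only [Pi.add_apply, Pi.smul_apply, smul_eq_mul] at this ⊢
  linear_combination this - h₁ * runInf f s

end ChainInfimum

section ChebyshevWeights

/-- The value at `c` of the rescaled Chebyshev polynomial `S_i`. For `c = 2 cos θ` it is
`sin ((i + 1) θ) / sin θ`; these numbers are the weights in the chain infima that describe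
alternating words in the Pitman transforms. -/
noncomputable def chebyshevWeight (c : ℝ) (i : ℕ) : ℝ := (Chebyshev.S ℝ i).eval c

lemma chebyshevWeight_zero (c : ℝ) : chebyshevWeight c 0 = 1 := by simp [chebyshevWeight]

lemma chebyshevWeight_one (c : ℝ) : chebyshevWeight c 1 = c := by simp [chebyshevWeight]

lemma chebyshevWeight_add_two (c : ℝ) (i : ℕ) :
    chebyshevWeight c (i + 2) = c * chebyshevWeight c (i + 1) - chebyshevWeight c i := by
  simp [chebyshevWeight, Chebyshev.S_add_two]

lemma chebyshevWeight_two_mul_cos_mul_sin (θ : ℝ) (i : ℕ) :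
    chebyshevWeight (2 * Real.cos θ) i * Real.sin θ = Real.sin ((i + 1) * θ) := by
  exact_mod_cast Chebyshev.S_two_mul_real_cos θ i

lemma sin_pi_div_pos {n : ℕ} (hn : 2 ≤ n) : 0 < Real.sin (Real.pi / n) :=
  Real.sin_pos_of_pos_of_lt_pi (by positivity)
    (div_lt_self Real.pi_pos (by exact_mod_cast hn))

lemma chebyshevWeight_two_mul_cos_pi_div_nonneg {n i : ℕ} (hn : 2 ≤ n) (hi : i < n) :
    0 ≤ chebyshevWeight (2 * Real.cos (Real.pi / n)) i := by
  refine nonneg_of_mul_nonneg_left ?_ (sin_pi_div_pos hn)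
  rw [chebyshevWeight_two_mul_cos_mul_sin]
  refine Real.sin_nonneg_of_nonneg_of_le_pi (by positivity) ?_
  rw [mul_div_left_comm]
  exact mul_le_of_le_one_right Real.pi_pos.le
    (div_le_one_of_le₀ (by exact_mod_cast hi) n.cast_nonneg)

lemma chebyshevWeight_two_mul_cos_pi_div_eq_zero {m : ℕ} (hm : m ≠ 0) :
    chebyshevWeight (2 * Real.cos (Real.pi / (m + 1 : ℕ))) m = 0 := by
  have hsin := (sin_pi_div_pos (n := m + 1) (by omega)).ne'
  refine (mul_eq_zero.1 ?_).resolve_right hsin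
  rw [chebyshevWeight_two_mul_cos_mul_sin, Nat.cast_succ, mul_div_cancel₀ _ (by positivity),
    Real.sin_pi]

end ChebyshevWeights

lemma altComp_succ_eq_comp {X : Type*} (P Q : X → X) (m : ℕ) :
    altComp P Q (m + 1) = altComp P Q m ∘ if Even m then P else Q := by
  induction m generalizing P Q with
  | zero => rfl
  | succ m ih =>
    rw [altComp, ih, altComp, Function.comp_assoc]
    congr 2
    by_cases h : Even m <;> simp [h, Nat.even_add_one]

section Pitman

variable {V : Type*} [AddCommGroup V] [Module ℝ V] {α β : V} {αv βv γ : Module.Dual ℝ V}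
  {σ : ℝ → V} {T : ℝ}

lemma pitman_apply (α : V) (αv : Module.Dual ℝ V) (σ : ℝ → V) (t : ℝ) :
    pitman α αv σ t = σ t - runInf (αv ∘ σ) t • α := rfl

lemma dual_comp_pitman (α : V) (αv γ : Module.Dual ℝ V) (σ : ℝ → V) :
    γ ∘ pitman α αv σ = γ ∘ σ - γ α • runInf (αv ∘ σ) := by
  funext t
  simp [pitman_apply, mul_comm]

lemma pitman_smul (α : V) (αv : Module.Dual ℝ V) {r : ℝ} (hr : 0 < r) :
    pitman (r • α) (r⁻¹ • αv) = pitman α αv := by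
  funext σ t
  have hcomp : ⇑(r⁻¹ • αv) ∘ σ = r⁻¹ • (αv ∘ σ) := rfl
  rw [pitman_apply, pitman_apply, hcomp, runInf_smul (inv_nonneg.2 hr.le), Pi.smul_apply,
    smul_smul, smul_eq_mul, mul_right_comm, inv_mul_cancel₀ hr.ne', one_mul]

lemma continuousOn_dual_comp_pitman (α : V) (hα : ContinuousOn (αv ∘ σ) (Icc 0 T))
    (hγ : ContinuousOn (γ ∘ σ) (Icc 0 T)) : ContinuousOn (γ ∘ pitman α αv σ) (Icc 0 T) := by
  rw [dual_comp_pitman]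
  exact hγ.sub ((continuousOn_runInf hα).const_smul _)

lemma continuousOn_dual_comp_altComp_pitman (m : ℕ) (α β : V)
    (hα : ContinuousOn (αv ∘ σ) (Icc 0 T)) (hβ : ContinuousOn (βv ∘ σ) (Icc 0 T))
    (hγ : ContinuousOn (γ ∘ σ) (Icc 0 T)) :
    ContinuousOn (γ ∘ altComp (pitman α αv) (pitman β βv) m σ) (Icc 0 T) := by
  induction m generalizing α β αv βv γ with
  | zero => exact hγ
  | succ m ih => exact continuousOn_dual_comp_pitman α (ih β α hβ hα hα) (ih β α hβ hα hγ)

theorem altComp_pitman_apply {c : ℝ} (hα : αv α = 2) (hβ : βv β = 2) (hαβ : αv β = -c)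
    (hβα : βv α = -c) (m : ℕ) (hc : ∀ i ≤ m, 0 ≤ chebyshevWeight c i)
    (hασ : ContinuousOn (αv ∘ σ) (Icc 0 T)) (hβσ : ContinuousOn (βv ∘ σ) (Icc 0 T))
    {t : ℝ} (ht : t ∈ Icc 0 T) :
    altComp (pitman α αv) (pitman β βv) (m + 1) σ t =
      σ t - chainInf (m + 1) (chebyshevWeight c) (αv ∘ σ) (βv ∘ σ) t • α
        - chainInf m (chebyshevWeight c) (βv ∘ σ) (αv ∘ σ) t • β := by
  have hrec := chebyshevWeight_add_two c
  have h₀ := chebyshevWeight_zero c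
  have h₁ : chebyshevWeight c 1 = c * chebyshevWeight c 0 := by
    rw [h₀, mul_one, chebyshevWeight_one]
  induction m generalizing σ with
  | zero => simp [altComp, chainInf, pitman_apply, h₀]
  | succ m ih =>
    have hc' : ∀ i ≤ m, 0 ≤ chebyshevWeight c i := fun i hi ↦ hc i (by omega)
    rw [altComp_succ_eq_comp, Function.comp_apply]
    rcases m.even_or_odd with hm | hm
    · rw [if_neg (by simpa [Nat.even_add_one] using hm),
        ih hc' (continuousOn_dual_comp_pitman β hβσ hασ) (continuousOn_dual_comp_pitman β hβσ hβσ),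
        dual_comp_pitman, dual_comp_pitman, hαβ, hβ, neg_smul, sub_neg_eq_add,
        chainInf_reflect_of_odd hβσ hασ h₁ hrec hm.add_one hc ht,
        ← chainInf_reflect_of_even hβσ hασ hrec hm hc' ht, h₀, one_smul,
        Pi.add_apply, pitman_apply]
      module
    · rw [if_pos hm.add_one,
        ih hc' (continuousOn_dual_comp_pitman α hασ hασ) (continuousOn_dual_comp_pitman α hασ hβσ),
        dual_comp_pitman, dual_comp_pitman, hβα, hα, neg_smul, sub_neg_eq_add,
        chainInf_reflect_of_odd hασ hβσ h₁ hrec hm hc' ht,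
        ← chainInf_reflect_of_even hασ hβσ hrec hm.add_one hc ht, h₀, one_smul,
        Pi.add_apply, pitman_apply]
      module

theorem pitman_braid_of_dual_eq {n : ℕ} (hn : 2 ≤ n) (hα : αv α = 2) (hβ : βv β = 2)
    (hαβ : αv β = -(2 * Real.cos (Real.pi / n))) (hβα : βv α = -(2 * Real.cos (Real.pi / n)))
    (hασ : ContinuousOn (αv ∘ σ) (Icc 0 T)) (hβσ : ContinuousOn (βv ∘ σ) (Icc 0 T)) :
    EqOn (altComp (pitman α αv) (pitman β βv) n σ) (altComp (pitman β βv) (pitman α αv) n σ)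
      (Icc 0 T) := by
  intro t ht
  obtain ⟨m, rfl⟩ : ∃ m, n = m + 1 := ⟨n - 1, by omega⟩
  have hnonneg : ∀ i ≤ m, 0 ≤ chebyshevWeight (2 * Real.cos (Real.pi / (m + 1 : ℕ))) i :=
    fun i hi ↦ chebyshevWeight_two_mul_cos_pi_div_nonneg hn (by omega)
  have hzero := chebyshevWeight_two_mul_cos_pi_div_eq_zero (m := m) (by omega)
  rw [altComp_pitman_apply hα hβ hαβ hβα m hnonneg hασ hβσ ht,
    altComp_pitman_apply hβ hα hβα hαβ m hnonneg hβσ hασ ht,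
    chainInf_succ_of_eq_zero _ _ hzero, chainInf_succ_of_eq_zero _ _ hzero, sub_right_comm]

lemma exists_pos_scale {a b c : ℝ} (ha : 0 ≤ a) (hc : 0 ≤ c) (hzero : a = 0 ↔ b = 0)
    (hab : a * b = c ^ 2) : ∃ r > 0, r⁻¹ * a = c ∧ r * b = c := by
  rcases hc.eq_or_lt' with rfl | hc
  · obtain ⟨rfl, rfl⟩ : a = 0 ∧ b = 0 := by
      simp only [ne_eq, OfNat.ofNat_ne_zero, not_false_eq_true, zero_pow, mul_eq_zero] at hab
      tauto
    exact ⟨1, one_pos, by simp⟩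
  · have ha : 0 < a := ha.lt_of_ne' (by rintro rfl; nlinarith)
    exact ⟨a / c, by positivity, by field_simp, by field_simp; linarith⟩

theorem pitman_braid {n : ℕ} (hn : 2 ≤ n) (hα : αv α = 2) (hβ : βv β = 2)
    (hαβ : αv β ≤ 0) (hzero : αv β = 0 ↔ βv α = 0)
    (hcos : αv β * βv α = 4 * Real.cos (Real.pi / n) ^ 2)
    (hασ : ContinuousOn (αv ∘ σ) (Icc 0 T)) (hβσ : ContinuousOn (βv ∘ σ) (Icc 0 T)) :
    EqOn (altComp (pitman α αv) (pitman β βv) n σ) (altComp (pitman β βv) (pitman α αv) n σ)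
      (Icc 0 T) := by
  have hcos_nonneg : 0 ≤ Real.cos (Real.pi / n) := by
    have hnonneg : 0 ≤ Real.pi / n := by positivity
    have hle : Real.pi / n ≤ Real.pi / 2 := by gcongr; exact_mod_cast hn
    exact Real.cos_nonneg_of_mem_Icc ⟨by linarith, hle⟩
  obtain ⟨r, hr, hrα, hrβ⟩ := exists_pos_scale (c := 2 * Real.cos (Real.pi / n))
    (neg_nonneg.2 hαβ) (by linarith) (by simpa using hzero) (b := -βv α)
    (by linear_combination hcos)
  rw [← pitman_smul α αv hr]
  refine pitman_braid_of_dual_eq hn ?_ hβ ?_ ?_ (hασ.const_smul r⁻¹) hβσ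
  · simp [hα, hr.ne']
  · simp only [LinearMap.smul_apply, smul_eq_mul]
    linarith
  · simp only [map_smul, smul_eq_mul]
    linarith

end Pitman

section PathReversal

variable {V : Type*} [AddCommGroup V]

/-- The path reversal `κ` on paths on `[0, T]`. -/
def reversePath (T : ℝ) (σ : ℝ → V) (t : ℝ) : V := σ (T - t) - σ T

lemma reversePath_reversePath (T : ℝ) (σ : ℝ → V) (t : ℝ) :
    reversePath T (reversePath T σ) t = σ t - σ 0 := by
  simp [reversePath]

variable [Module ℝ V] {αv βv γ : Module.Dual ℝ V} {σ ρ : ℝ → V} {v : V} {T : ℝ}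

lemma continuousOn_dual_comp_reversePath (hσ : ContinuousOn (γ ∘ σ) (Icc 0 T)) :
    ContinuousOn (γ ∘ reversePath T σ) (Icc 0 T) := by
  have hcomp : γ ∘ reversePath T σ = fun t ↦ (γ ∘ σ) (T - t) - γ (σ T) := by
    funext t
    simp [reversePath]
  rw [hcomp]
  refine (hσ.comp (by fun_prop) fun t ht ↦ ?_).sub continuousOn_const
  exact ⟨sub_nonneg.2 ht.2, sub_le_self T ht.1⟩

lemma sInf_image_Icc_eq_runInf
    (hσ : ContinuousOn (γ ∘ σ) (Icc 0 T)) (hρ : ∀ t ∈ Icc 0 T, ρ t = reversePath T σ t + v)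
    {t : ℝ} (ht : t ∈ Icc 0 T) :
    sInf ((fun s ↦ γ (ρ s)) '' Icc t T) = runInf (γ ∘ σ) (T - t) + γ (v - σ T) := by
  have hγρ : ∀ s ∈ Icc 0 T, γ (ρ s) = γ (σ (T - s)) + γ (v - σ T) := by
    intro s hs
    rw [hρ s hs, reversePath, ← map_add]
    congr 1
    abel
  have hσ' : ContinuousOn (γ ∘ σ) (Icc 0 (T - t)) :=
    hσ.mono (Icc_subset_Icc_right (sub_le_self T ht.1))
  refine IsLeast.csInf_eq ⟨?_, ?_⟩
  · obtain ⟨s, hs, hmin⟩ := exists_runInf_eq hσ' (sub_nonneg.2 ht.2)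
    refine ⟨T - s, ⟨by linarith [hs.2], by linarith [hs.1]⟩, ?_⟩
    beta_reduce
    rw [hγρ _ ⟨by linarith [ht.1, hs.2], by linarith [hs.1]⟩, sub_sub_cancel, hmin,
      Function.comp_apply]
  · rintro _ ⟨s, hs, rfl⟩
    beta_reduce
    rw [hγρ s (Icc_subset_Icc_left ht.1 hs)]
    exact add_le_add_left (runInf_le hσ' ⟨sub_nonneg.2 hs.2, sub_le_sub_left hs.1 T⟩) _

lemma copitman_eq_reversePath_pitman (α : V)
    (hσ : ContinuousOn (αv ∘ σ) (Icc 0 T))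
    (hρ : ∀ t ∈ Icc 0 T, ρ t = reversePath T σ t + v) :
    ∀ t ∈ Icc 0 T, copitman T α αv ρ t = reversePath T (pitman α αv σ) t + v := by
  intro t ht
  have h₀ : (0 : ℝ) ∈ Icc 0 T := left_mem_Icc.2 (ht.1.trans ht.2)
  simp only [copitman, reversePath, pitman_apply]
  rw [sInf_image_Icc_eq_runInf hσ hρ ht, sInf_image_Icc_eq_runInf hσ hρ h₀, sub_zero, hρ t ht,
    reversePath]
  module

theorem altComp_copitman_eq_reversePath (m : ℕ) (α β : V)
    (hασ : ContinuousOn (αv ∘ σ) (Icc 0 T)) (hβσ : ContinuousOn (βv ∘ σ) (Icc 0 T))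
    (hρ : ∀ t ∈ Icc 0 T, ρ t = reversePath T σ t + v) :
    ∀ t ∈ Icc 0 T, altComp (copitman T α αv) (copitman T β βv) m ρ t =
      reversePath T (altComp (pitman α αv) (pitman β βv) m σ) t + v := by
  induction m generalizing α β αv βv with
  | zero => exact hρ
  | succ m ih =>
    exact copitman_eq_reversePath_pitman α
      (continuousOn_dual_comp_altComp_pitman m β α hβσ hασ hασ) (ih β α hβσ hασ)

end PathReversal

theorem copitman_braid_general {V : Type*} [AddCommGroup V] [Module ℝ V]
    (T : ℝ) (α β : V) (αv βv : Module.Dual ℝ V) (hα : αv α = 2) (hβ : βv β = 2)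
    (hαβ : αv β ≤ 0) (hzero : αv β = 0 ↔ βv α = 0) (n : ℕ) (hn : 2 ≤ n)
    (hcos : αv β * βv α = 4 * Real.cos (Real.pi / n) ^ 2) (π : ℝ → V)
    (hαπ : ContinuousOn (αv ∘ π) (Icc 0 T)) (hβπ : ContinuousOn (βv ∘ π) (Icc 0 T)) :
    EqOn (altComp (copitman T α αv) (copitman T β βv) n π)
      (altComp (copitman T β βv) (copitman T α αv) n π) (Icc 0 T) := by
  intro t ht
  have hασ := continuousOn_dual_comp_reversePath hαπ
  have hβσ := continuousOn_dual_comp_reversePath hβπ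
  have hπ : ∀ s ∈ Icc 0 T, π s = reversePath T (reversePath T π) s + π 0 := by
    intro s _
    simp [reversePath_reversePath]
  have hbraid := pitman_braid hn hα hβ hαβ hzero hcos hασ hβσ
  have hreverse : T - t ∈ Icc 0 T := ⟨sub_nonneg.2 ht.2, sub_le_self T ht.1⟩
  rw [altComp_copitman_eq_reversePath n α β hασ hβσ hπ t ht,
    altComp_copitman_eq_reversePath n β α hβσ hασ hπ t ht, reversePath, reversePath,
    hbraid hreverse, hbraid (right_mem_Icc.2 (ht.1.trans ht.2))]

/-- Braid relations for the co-Pitman transforms: under the same hypotheses as for the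
Pitman transforms, `E_α E_β E_α ⋯ = E_β E_α E_β ⋯` (`n` alternating factors each). -/
theorem copitman_braid
    {V : Type*} [NormedAddCommGroup V] [NormedSpace ℝ V] [FiniteDimensional ℝ V]
    (T : ℝ) (hT : 0 < T) (α β : V) (αv βv : Module.Dual ℝ V)
    (hα : αv α = 2) (hβ : βv β = 2)
    (hαβ : αv β < 0) (hβα : βv α < 0)
    (n : ℕ) (hn : 2 ≤ n)
    (hcos : αv β * βv α = 4 * Real.cos (Real.pi / n) ^ 2)
    (π : ℝ → V) (hcont : ContinuousOn π (Set.Icc 0 T)) (h0 : π 0 = 0) :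
    ∀ t ∈ Set.Icc 0 T,
      altComp (copitman T α αv) (copitman T β βv) n π t
        = altComp (copitman T β βv) (copitman T α αv) n π t := by
  have hdual (γ : Module.Dual ℝ V) : ContinuousOn (γ ∘ π) (Icc 0 T) :=
    γ.continuous_of_finiteDimensional.comp_continuousOn hcont
  exact copitman_braid_general T α β αv βv hα hβ hαβ.le (iff_of_false hαβ.ne hβα.ne) n hn hcos π
    (hdual αv) (hdual βv)
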